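/- For every integer m > 1, there are infinitely many imaginary quadratic number fields whose class number is divisible by m; that is, the set of negative squarefree integers d such that m divides the cardinality of the ideal class group Cl(ℚ(√d)) is infinite. -/

import Mathlib

open NumberField

/-- The Lucas sequence `β ^ n + γ ^ n` with `β + γ = t`, `β γ = b`. -/
def lucasV (t b : ℤ) : ℕ → ℤ
  | 0 => 2
  | 1 => t
  | (n + 2) => t * lucasV t b (n + 1) - b * lucasV t b n

lemma lucasV_spec {R : Type*} [CommRing R] (β γ : R) (t b : ℤ) (ht : β + γ = t)
    (hb : β * γ = b) (n : ℕ) : β ^ n + γ ^ n = (lucasV t b n : R) := by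
  induction n using Nat.strong_induction_on with
  | _ n ih =>
    match n with
    | 0 => simp [lucasV]; norm_num
    | 1 => simp [lucasV, ht]
    | n + 2 =>
      simp only [lucasV]
      push_cast
      rw [← ih n (by omega), ← ih (n + 1) (by omega), ← ht, ← hb]
      ring

lemma lucasV_dvd (t b : ℤ) (k : ℕ) : t ∣ lucasV t b (2 * k + 1) := by
  induction k with
  | zero => simp [lucasV]
  | succ k ih =>
    have : 2 * (k + 1) + 1 = (2 * k + 1) + 2 := by ring
    rw [this, lucasV]
    exact dvd_sub (dvd_mul_right _ _) (Dvd.dvd.mul_left ih _)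

lemma lucasV_mod (t b : ℤ) (ht : t ^ 2 = 1) (n : ℕ) :
    b ^ 2 ∣ lucasV t b (n + 1) - t ^ (n + 1) * (1 - (n + 1) * b) + (if n = 0 then - t * b else 0) := by
  induction n using Nat.strong_induction_on with
  | _ n ih =>
    match n with
    | 0 => simp [lucasV]; ring_nf; simp
    | 1 =>
      have : lucasV t b 2 = t * t - b * 2 := by simp [lucasV]
      simp only [Nat.reduceAdd, this]
      have : t * t - b * 2 - t ^ 2 * (1 - ((1 : ℕ) + 1) * b) + (if 1 = 0 then - t * b else 0)
        = (t ^ 2 - 1) * (2 * b) := by push_cast; simp; ring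
      rw [this, ht]; simp
    | n + 2 =>
      obtain ⟨c, hc⟩ := ih (n + 1) (by omega)
      obtain ⟨e, he⟩ := ih n (by omega)
      have h3 : lucasV t b (n + 2 + 1) = t * lucasV t b (n + 1 + 1) - b * lucasV t b (n + 1) := by
        rw [lucasV]
      have ht3 : t ^ (n + 2 + 1) = t ^ (n + 1) := by
        rw [show n + 2 + 1 = (n + 1) + 2 by ring, pow_add, ht, mul_one]
      have ht2 : t ^ (n + 1 + 1) * t = t ^ (n + 1) := by
        rw [← pow_succ, show n + 1 + 1 + 1 = (n + 1) + 2 by ring, pow_add, ht, mul_one]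
      rw [h3, ht3]
      simp only [Nat.add_eq_zero_iff, one_ne_zero, OfNat.ofNat_ne_zero, and_false, if_false, add_zero] at hc ⊢
      push_cast at hc he ⊢
      have e1 := eq_add_of_sub_eq hc
      rw [e1]
      have : lucasV t b (n + 1) = b ^ 2 * e + t ^ (n + 1) * (1 - (n + 1) * b)
        - (if n = 0 then - t * b else 0) := by linarith
      rw [this]
      split_ifs with h0
      · refine ⟨t * c - b * e + t ^ (n + 1) * (n + 1) - t, ?_⟩
        linear_combination (1 - (n + 1 + 1 : ℤ) * b) * ht2
      · refine ⟨t * c - b * e + t ^ (n + 1) * (n + 1), ?_⟩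
        linear_combination (1 - (n + 1 + 1 : ℤ) * b) * ht2

lemma lucasV_ne (p : ℕ) (hp : p.Prime) (k : ℕ) (hk : 0 < k) (b t e : ℤ) (hb : b = 3 ^ k)
    (hbp : (p : ℤ) < b) (he : e = 1 ∨ e = -1) : lucasV t b p ≠ e := by
  intro h
  rcases hp.eq_two_or_odd' with rfl | ⟨j, rfl⟩
  · have h2 : lucasV t b 2 = t * t - b * 2 := by simp [lucasV]
    rw [h2] at h
    have h3 : b % 3 = 0 := by
      rw [hb]; exact Int.emod_eq_zero_of_dvd (dvd_pow_self _ hk.ne')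
    have h4 : b % 2 = 1 := by
      rw [hb]; exact Int.odd_iff.1 (Odd.pow (by decide))
    have ht3 : (t * t) % 3 = 0 ∨ (t * t) % 3 = 1 := by
      have : t % 3 = 0 ∨ t % 3 = 1 ∨ t % 3 = 2 := by omega
      rcases this with h | h | h <;> simp [Int.mul_emod, h]
    have ht4 : (t * t) % 4 = 0 ∨ (t * t) % 4 = 1 := by
      have : t % 4 = 0 ∨ t % 4 = 1 ∨ t % 4 = 2 ∨ t % 4 = 3 := by omega
      rcases this with h | h | h | h <;> simp [Int.mul_emod, h]
    omega
  · have hj : j ≠ 0 := by rintro rfl; exact absurd hp (by norm_num)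
    have htd : t ∣ e := h ▸ lucasV_dvd t b j
    have ht : t = 1 ∨ t = -1 := by
      apply Int.isUnit_iff.1
      apply isUnit_of_dvd_unit htd
      rcases he with rfl | rfl <;> simp
    have ht2 : t ^ 2 = 1 := by rcases ht with rfl | rfl <;> norm_num
    have hm := lucasV_mod t b ht2 (2 * j)
    have htp : t ^ (2 * j + 1) = t := by rw [pow_succ, pow_mul, ht2]; simp
    rw [h, htp, if_neg (by omega)] at hm
    obtain ⟨c, hc⟩ := hm
    push_cast at hc hbp
    have hj' : (1 : ℤ) ≤ j := by exact_mod_cast Nat.one_le_iff_ne_zero.2 hj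
    have hte : b ∣ e - t := ⟨b * c - t * (2 * j + 1), by linear_combination hc⟩
    have hte' : e = t := by
      have h0 := Int.eq_zero_of_abs_lt_dvd hte
        (by rcases he with rfl | rfl <;> rcases ht with rfl | rfl <;> norm_num <;> linarith)
      linarith
    subst hte'
    have hb0 : b ≠ 0 := by intro h; rw [h] at hbp; linarith
    have h5 : e * (2 * j + 1) = b * c := by
      apply mul_left_cancel₀ hb0
      linear_combination hc
    have h6 : b ∣ 2 * j + 1 := ⟨e * c, by linear_combination e * h5 - (2 * j + 1) * ht2⟩
    have := Int.le_of_dvd (by linarith) h6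
    linarith

lemma exists_conj (K : Type) [Field K] [NumberField K] (D : ℤ) (hD : 0 < D) (x : K)
    (hx : x * x = -(D : K)) (hK : Module.finrank ℚ K = 2) :
    ∃ σ : K →+* K, σ x = -x ∧ ∀ z, ∃ p q : ℚ, z = p + q * x ∧ σ z = p - q * x := by
  have hDq : (0 : ℚ) < D := by exact_mod_cast hD
  have : Fact (∀ r : ℚ, r ^ 2 ≠ (-D : ℚ) + 0 * r) := ⟨fun r hr => by nlinarith [sq_nonneg r]⟩
  let f : QuadraticAlgebra ℚ (-D : ℚ) 0 →ₐ[ℚ] K := QuadraticAlgebra.lift ⟨x, by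
    rw [hx, Algebra.smul_def]; simp⟩
  have hf : ∀ z, f z = z.re + z.im * x := by
    intro z
    change z.re • (1 : K) + z.im • x = _
    simp [Algebra.smul_def]
  have hinj : Function.Injective f := f.toRingHom.injective
  have hbij : Function.Bijective f := by
    refine ⟨hinj, ?_⟩
    have := (LinearMap.injective_iff_surjective_of_finrank_eq_finrank (f := f.toLinearMap)
      (by rw [hK, QuadraticAlgebra.finrank_eq_two])).1 hinj
    exact this
  let e := AlgEquiv.ofBijective f hbij
  refine ⟨(f.toRingHom.comp (starRingEnd _)).comp e.symm.toAlgHom.toRingHom, ?_, fun z => ?_⟩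
  · change f (star (e.symm x)) = _
    have h : e.symm x = ⟨0, 1⟩ := by
      rw [AlgEquiv.symm_apply_eq]
      change _ = f _
      rw [hf]; simp
    rw [h, hf]; simp
  refine ⟨(e.symm z).re, (e.symm z).im, ?_, ?_⟩
  · rw [← hf]; exact (e.apply_symm_apply z).symm
  · change f (star (e.symm z)) = _
    rw [hf]
    simp [sub_eq_add_neg]

lemma exists_conj_int (K : Type) [Field K] [NumberField K] (D : ℤ) (hD : 0 < D) (x : K)
    (hx : x * x = -(D : K)) (hK : Module.finrank ℚ K = 2) :
    ∃ s : 𝓞 K →+* 𝓞 K, (∀ z : 𝓞 K, algebraMap (𝓞 K) K z = (1 + x) / 2 → z + s z = 1) ∧ ∀ z : 𝓞 K, ∃ (t n : ℤ) (q : ℚ), z + s z = t ∧ z * s z = n ∧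
      (n : ℚ) = (t / 2) ^ 2 + D * q ^ 2 ∧ algebraMap (𝓞 K) K z = t / 2 + q * x := by
  obtain ⟨σ, hσx, hσ⟩ := exists_conj K D hD x hx hK
  refine ⟨RingOfIntegers.mapRingHom σ, fun z hz => ?_, fun z => ?_⟩
  · apply RingOfIntegers.ext
    change algebraMap (𝓞 K) K _ = algebraMap (𝓞 K) K _
    have : algebraMap (𝓞 K) K (RingOfIntegers.mapRingHom σ z) = σ (algebraMap (𝓞 K) K z) := rfl
    rw [map_add, this, hz]
    simp [hσx, map_ofNat σ 2]
    ring
  obtain ⟨p, q, h1, h2⟩ := hσ (algebraMap (𝓞 K) K z)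
  have hm : algebraMap (𝓞 K) K (RingOfIntegers.mapRingHom σ z) = σ (algebraMap (𝓞 K) K z) := rfl
  have key : ∀ (w : 𝓞 K) (r : ℚ), algebraMap (𝓞 K) K w = r → ∃ a : ℤ, w = a ∧ (a : ℚ) = r := by
    intro w r h
    have hi : IsIntegral ℤ r := by
      have := w.isIntegral_coe
      rw [h, ← eq_ratCast (algebraMap ℚ K)] at this
      exact (isIntegral_algebraMap_iff (algebraMap ℚ K).injective).1 this
    obtain ⟨a, ha⟩ := IsIntegrallyClosed.isIntegral_iff.1 hi
    refine ⟨a, ?_, by simpa using ha⟩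
    apply RingOfIntegers.ext
    change algebraMap (𝓞 K) K _ = algebraMap (𝓞 K) K _
    rw [h, ← ha]; simp
  obtain ⟨t, ht, ht'⟩ := key (z + RingOfIntegers.mapRingHom σ z) (2 * p) (by
    rw [map_add, hm, h2, h1]; push_cast; ring)
  obtain ⟨n, hn, hn'⟩ := key (z * RingOfIntegers.mapRingHom σ z) (p ^ 2 + D * q ^ 2) (by
    rw [map_mul, hm, h2, h1]; push_cast
    linear_combination - (q : K) ^ 2 * hx)
  refine ⟨t, n, q, ht, hn, ?_, ?_⟩
  · rw [hn', ht']; ring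
  · rw [h1]
    have : (t : K) = 2 * p := by exact_mod_cast congrArg (Rat.cast : ℚ → K) ht'
    rw [this]; ring

lemma unit_eq (K : Type) [Field K] [NumberField K] (D : ℤ) (hD : 0 < D) (x : K)
    (h1 : ¬ IsSquare D) (h3 : ¬ IsSquare (3 * D))
    (s : 𝓞 K →+* 𝓞 K) (hs : ∀ z : 𝓞 K, ∃ (t n : ℤ) (q : ℚ), z + s z = t ∧ z * s z = n ∧
      (n : ℚ) = (t / 2) ^ 2 + D * q ^ 2 ∧ algebraMap (𝓞 K) K z = t / 2 + q * x) (ε : (𝓞 K)ˣ) :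
    (ε : 𝓞 K) = 1 ∨ (ε : 𝓞 K) = -1 := by
  have hDq : (0 : ℚ) < D := by exact_mod_cast hD
  obtain ⟨t, n, q, ht, hn, hq, hz⟩ := hs ε
  obtain ⟨t', n', q', ht', hn', hq', hz'⟩ := hs (ε⁻¹ : (𝓞 K)ˣ)
  have hnn : n * n' = 1 := by
    have : ((n * n' : ℤ) : 𝓞 K) = ((1 : ℤ) : 𝓞 K) := by
      push_cast
      rw [← hn, ← hn']
      have e1 : (ε : 𝓞 K) * (ε⁻¹ : (𝓞 K)ˣ) = 1 := by simp
      have e2 := congrArg s e1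
      rw [map_mul, map_one] at e2
      linear_combination (s ε * s (ε⁻¹ : (𝓞 K)ˣ)) * e1 + e2
    exact_mod_cast this
  have hn0 : (0 : ℚ) ≤ n := by rw [hq]; positivity
  have hn1 : n = 1 := by
    have : 0 ≤ n := by exact_mod_cast hn0
    exact Int.eq_one_of_mul_eq_one_right this hnn
  subst hn1
  push_cast at hq
  have hDq2 : (0 : ℚ) ≤ D * q ^ 2 := by positivity
  have ht4 : t ^ 2 ≤ 4 := by
    have : (t : ℚ) ^ 2 ≤ 4 := by nlinarith
    exact_mod_cast this
  have hl : -2 ≤ t := by nlinarith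
  have hu : t ≤ 2 := by nlinarith
  have hq0 : t ^ 2 = 4 → q = 0 := by
    intro h
    have h' : (t : ℚ) ^ 2 = 4 := by exact_mod_cast h
    have : D * q ^ 2 = 0 := by linear_combination -hq - h' / 4
    rcases mul_eq_zero.1 this with h | h
    · exact absurd h hDq.ne'
    · exact pow_eq_zero_iff (two_ne_zero) |>.1 h
  have hne : t ^ 2 = 1 → False := by
    intro h
    have h' : (t : ℚ) ^ 2 = 1 := by exact_mod_cast h
    have h4 : D * (2 * q) ^ 2 = 3 := by linear_combination -4 * hq - h'
    have hq0 : q ≠ 0 := by rintro rfl; norm_num at h4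
    apply h3
    rw [← Rat.isSquare_intCast_iff]
    refine ⟨3 / (2 * q), ?_⟩
    push_cast
    field_simp
    linear_combination h4
  have hcases : t = -2 ∨ t = -1 ∨ t = 0 ∨ t = 1 ∨ t = 2 := by omega
  rcases hcases with rfl | rfl | rfl | rfl | rfl
  · right
    apply RingOfIntegers.ext
    change algebraMap (𝓞 K) K _ = algebraMap (𝓞 K) K _
    rw [hz, hq0 (by norm_num)]; simp
  · exact (hne (by norm_num)).elim
  · exfalso
    have hq0 : q ≠ 0 := by rintro rfl; norm_num at hq
    apply h1
    rw [← Rat.isSquare_intCast_iff]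
    refine ⟨1 / q, ?_⟩
    field_simp
    push_cast at hq
    linear_combination -hq
  · exact (hne (by norm_num)).elim
  · left
    apply RingOfIntegers.ext
    change algebraMap (𝓞 K) K _ = algebraMap (𝓞 K) K _
    rw [hz, hq0 (by norm_num)]; simp

lemma class_number_dvd (m : ℕ) (hm : 1 < m) (K : Type) [Field K] [NumberField K] (x : K)
    (hx : x * x = -((4 * (3 ^ m) ^ m - 1 : ℤ) : K)) (hK : Module.finrank ℚ K = 2) :
    m ∣ Nat.card (ClassGroup (𝓞 K)) := by
  have hA : (3 : ℤ) ∣ (3 ^ m) ^ m := by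
    rw [← pow_mul]; exact dvd_pow_self _ (by positivity)
  have hA0 : (0 : ℤ) < (3 ^ m) ^ m := by positivity
  obtain ⟨D, hDdef⟩ : ∃ D : ℤ, D = 4 * (3 ^ m) ^ m - 1 := ⟨_, rfl⟩
  rw [← hDdef] at hx
  have hD : 0 < D := by omega
  have h1 : ¬ IsSquare D := by
    rintro ⟨r, hr⟩
    have ht4 : (r * r) % 4 = 0 ∨ (r * r) % 4 = 1 := by
      have : r % 4 = 0 ∨ r % 4 = 1 ∨ r % 4 = 2 ∨ r % 4 = 3 := by omega
      rcases this with h | h | h | h <;> simp [Int.mul_emod, h]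
    omega
  have h3 : ¬ IsSquare (3 * D) := by
    rintro ⟨r, hr⟩
    have hr3 : (3 : ℤ) ∣ r := by
      have : (3 : ℤ) ∣ r * r := ⟨D, hr.symm⟩
      rcases Int.prime_three.dvd_mul.1 this with h | h <;> exact h
    obtain ⟨u, rfl⟩ := hr3
    have : D = 3 * (u * u) := by linarith
    omega
  obtain ⟨s, hs1, hs⟩ := exists_conj_int K D hD x hx hK
  have hunit := unit_eq K D hD x h1 h3 s hs
  have hDK : (D : K) = 4 * (3 ^ m) ^ m - 1 := by rw [hDdef]; push_cast; ring
  have hint : IsIntegral ℤ ((1 + x) / 2) := by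
    refine ⟨Polynomial.X ^ 2 + (Polynomial.C (-1) * Polynomial.X + Polynomial.C ((3 ^ m) ^ m : ℤ)),
      ?_, ?_⟩
    · apply Polynomial.monic_X_pow_add
      exact lt_of_le_of_lt Polynomial.degree_linear_le (by norm_num)
    · simp only [Polynomial.eval₂_add, Polynomial.eval₂_mul, Polynomial.eval₂_C,
        Polynomial.eval₂_X, Polynomial.eval₂_X_pow]
      simp only [map_neg, map_one, map_pow, map_ofNat]
      linear_combination hx / 4 - hDK / 4
  obtain ⟨α, hα⟩ : ∃ α : 𝓞 K, algebraMap (𝓞 K) K α = (1 + x) / 2 := ⟨⟨_, hint⟩, rfl⟩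
  have hsum := hs1 α hα
  have hprod : α * s α = (3 ^ m) ^ m := by
    have : s α = 1 - α := by linear_combination hsum
    rw [this]
    apply RingOfIntegers.ext
    change algebraMap (𝓞 K) K _ = algebraMap (𝓞 K) K _
    simp only [map_mul, map_sub, map_one, hα, map_pow, map_ofNat]
    linear_combination -hx / 4 + hDK / 4
  have hα0 : α ≠ 0 := by
    rintro rfl
    rw [zero_mul] at hprod
    have h33 : (3 : 𝓞 K) ≠ 0 := by exact_mod_cast (by norm_num : (3 : ℕ) ≠ 0)
    exact (pow_ne_zero m (pow_ne_zero m h33)) hprod.symm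
  have hcop : IsCoprime (Ideal.span {α}) (Ideal.span {s α}) := by
    rw [Ideal.isCoprime_span_singleton_iff]
    exact ⟨1, 1, by rw [one_mul, one_mul, hsum]⟩
  have hidl : Ideal.span {α} * Ideal.span {s α} = (Ideal.span {(3 ^ m : 𝓞 K)}) ^ m := by
    rw [Ideal.span_singleton_mul_span_singleton, Ideal.span_singleton_pow, hprod]
  obtain ⟨I, hI⟩ := exists_eq_pow_of_mul_eq_pow_of_coprime hcop hidl
  have hm0 : m ≠ 0 := by omega
  have hI0 : I ≠ 0 := by
    rintro rfl
    rw [zero_pow hm0, Ideal.zero_eq_bot, Ideal.span_singleton_eq_bot] at hI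
    exact hα0 hI
  have hImem : I ∈ nonZeroDivisors (Ideal (𝓞 K)) := mem_nonZeroDivisors_of_ne_zero hI0
  have hpow : ∀ k : ℕ, (ClassGroup.mk0 ⟨I, hImem⟩) ^ k = 1 ↔ (I ^ k).IsPrincipal := by
    intro k
    rw [← map_pow]
    exact ClassGroup.mk0_eq_one_iff (pow_mem hImem k)
  have hord : orderOf (ClassGroup.mk0 ⟨I, hImem⟩) = m := by
    apply orderOf_eq_of_pow_and_pow_div_prime (by omega)
    · rw [hpow, ← hI]; exact ⟨α, rfl⟩
    · intro p hp hpm hone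
      obtain ⟨k, rfl⟩ := hpm
      rw [Nat.mul_div_cancel_left _ hp.pos, hpow] at hone
      obtain ⟨β, hβ⟩ := hone
      change I ^ k = Ideal.span {β} at hβ
      rw [mul_comm p k, pow_mul, hβ, Ideal.span_singleton_pow, Ideal.span_singleton_eq_span_singleton] at hI
      obtain ⟨ε, hε⟩ := hI.symm
      obtain ⟨t, n, q, ht, hn, hq, -⟩ := hs β
      have hk : 0 < k := Nat.pos_of_ne_zero (by rintro rfl; simp at hm)
      obtain ⟨e, he, heε⟩ : ∃ e : ℤ, (e = 1 ∨ e = -1) ∧ (ε : 𝓞 K) = e := by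
        rcases hunit ε with h | h
        · exact ⟨1, Or.inl rfl, by simp [h]⟩
        · exact ⟨-1, Or.inr rfl, by simp [h]⟩
      have he2 : e * e = 1 := by rcases he with rfl | rfl <;> norm_num
      have hα' : α = e * β ^ p := by rw [← hε, heε]; ring
      have hsα' : s α = e * (s β) ^ p := by rw [hα']; simp
      have heR : (e : 𝓞 K) * e = 1 := by exact_mod_cast congrArg (Int.cast : ℤ → 𝓞 K) he2
      have hnp : n ^ p = ((3 : ℤ) ^ (p * k * k)) ^ p := by
        have : ((n ^ p : ℤ) : 𝓞 K) = ((((3 : ℤ) ^ (p * k * k)) ^ p : ℤ) : 𝓞 K) := by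
          push_cast
          rw [← hn, mul_pow]
          have h5 : (β ^ p * (s β) ^ p) = α * s α := by
            rw [hsα', hα']
            linear_combination -(β ^ p * s β ^ p) * heR
          rw [h5, hprod, ← pow_mul, ← pow_mul]
          congr 1; ring
        exact_mod_cast this
      have hn0 : 0 ≤ n := by
        have : (0 : ℚ) ≤ n := by
          have : (0 : ℚ) < D := by exact_mod_cast hD
          rw [hq]; positivity
        exact_mod_cast this
      have hn3 : n = 3 ^ (p * k * k) := (pow_left_inj₀ hn0 (by positivity) hp.ne_zero).1 hnp
      have hbp : (p : ℤ) < n := by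
        have h6 : p < 3 ^ p := Nat.lt_pow_self (by norm_num)
        have h7 : 3 ^ p ≤ 3 ^ (p * k * k) := by
          apply Nat.pow_le_pow_right (by norm_num)
          nlinarith [Nat.mul_le_mul hk hk, hp.pos]
        rw [hn3]
        exact_mod_cast lt_of_lt_of_le h6 h7
      refine lucasV_ne p hp (p * k * k) (by have := hp.pos; positivity) n t e hn3 hbp he ?_
      have : ((lucasV t n p : ℤ) : 𝓞 K) = (e : 𝓞 K) := by
        rw [← lucasV_spec β (s β) t n ht hn p]
        rw [hα', map_mul, map_pow, map_intCast] at hsum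
        linear_combination (e : 𝓞 K) * hsum - (β ^ p + s β ^ p) * heR
      exact_mod_cast this
  rw [← hord]
  exact orderOf_dvd_natCard _

lemma exists_disc (m : ℕ) (hm : 1 < m) : ∃ d : ℤ, d < 0 ∧ Squarefree d ∧
      ∀ (K : Type) [Field K] [NumberField K],
        (∃ x : K, x * x = (d : K)) → Module.finrank ℚ K = 2 →
          m ∣ Nat.card (ClassGroup (𝓞 K)) := by
  have hA0 : 0 < (3 ^ m) ^ m := by positivity
  obtain ⟨a, b, ha, hb, hab, hsq⟩ := Nat.sq_mul_squarefree_of_pos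
    (n := 4 * (3 ^ m) ^ m - 1) (by omega)
  refine ⟨-a, by omega, ?_, ?_⟩
  · have := Int.squarefree_natCast.2 hsq
    rwa [← Int.squarefree_natAbs, Int.natAbs_neg, Int.natAbs_natCast]
  · rintro K _ _ ⟨x, hx⟩ hK
    apply class_number_dvd m hm K (b * x) _ hK
    have h : (4 * (3 ^ m) ^ m - 1 : ℤ) = b ^ 2 * a := by
      have : b ^ 2 * a + 1 = 4 * (3 ^ m) ^ m := by omega
      have h2 : ((b ^ 2 * a + 1 : ℕ) : ℤ) = ((4 * (3 ^ m) ^ m : ℕ) : ℤ) := by rw [this]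
      push_cast at h2
      linarith
    rw [h]
    push_cast at hx ⊢
    linear_combination (b : K) ^ 2 * hx

lemma exists_field (d : ℤ) (hd : d < 0) : ∃ (K : Type) (_ : Field K) (_ : NumberField K),
    (∃ x : K, x * x = (d : K)) ∧ Module.finrank ℚ K = 2 := by
  have hdq : (d : ℚ) < 0 := by exact_mod_cast hd
  have : Fact (∀ r : ℚ, r ^ 2 ≠ (d : ℚ) + 0 * r) := ⟨fun r hr => by nlinarith [sq_nonneg r]⟩
  have : CharZero (QuadraticAlgebra ℚ (d : ℚ) 0) := algebraRat.charZero _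
  refine ⟨QuadraticAlgebra ℚ (d : ℚ) 0, inferInstance, ?_, ⟨⟨0, 1⟩, ?_⟩, ?_⟩
  · constructor
  · ext <;> simp
  · convert QuadraticAlgebra.finrank_eq_two (R := ℚ) (d : ℚ) 0

/-- Nagell: for every integer `m > 1`, there are infinitely many imaginary quadratic
fields whose class number is divisible by `m`; i.e. the set of negative squarefree
integers `d` such that `m` divides the class number of `ℚ(√d)` (characterized as a
degree-2 number field containing a square root of `d`) is infinite. -/
theorem infinitely_many_imag_quad_class_number_divisible (m : ℕ) (hm : 1 < m) :
    {d : ℤ | d < 0 ∧ Squarefree d ∧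
      ∀ (K : Type) [Field K] [NumberField K],
        (∃ x : K, x * x = (d : K)) → Module.finrank ℚ K = 2 →
          m ∣ Nat.card (ClassGroup (𝓞 K))}.Infinite := by
  intro hfin
  have hex : ∀ d : ℤ, ∃ h : ℕ, 0 < h ∧ (d < 0 → ∃ (K : Type) (_ : Field K) (_ : NumberField K),
      (∃ x : K, x * x = (d : K)) ∧ Module.finrank ℚ K = 2 ∧
        Nat.card (ClassGroup (𝓞 K)) = h) := by
    intro d
    by_cases hd : d < 0
    · obtain ⟨K, i1, i2, hx, hK⟩ := exists_field d hd
      exact ⟨Nat.card (ClassGroup (𝓞 K)), Nat.card_pos, fun _ => ⟨K, i1, i2, hx, hK, rfl⟩⟩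
    · exact ⟨1, one_pos, fun h => absurd h hd⟩
  choose h hpos hh using hex
  obtain ⟨P, hPdef⟩ : ∃ P : ℕ, P = ∏ d ∈ hfin.toFinset, h d := ⟨_, rfl⟩
  have hP : 0 < P := by rw [hPdef]; exact Finset.prod_pos fun d _ => hpos d
  have hmP : 1 < m * P := by nlinarith
  obtain ⟨d, hd, hsq, hdiv⟩ := exists_disc (m * P) hmP
  have hmem : d ∈ hfin.toFinset := by
    rw [Set.Finite.mem_toFinset]
    exact ⟨hd, hsq, fun K _ _ hx hK => (dvd_mul_right m P).trans (hdiv K hx hK)⟩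
  obtain ⟨K, i1, i2, hx, hK, hc⟩ := hh d hd
  have h1 := hdiv K hx hK
  rw [hc] at h1
  have h2 : h d ∣ P := by rw [hPdef]; exact Finset.dvd_prod_of_mem h hmem
  have h3 := Nat.le_of_dvd hP (h1.trans h2)
  nlinarith
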